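/- (Theorem 1, expectation form.) Let (Ω, μ) be a probability space and X : Ω → ℝ^{s×d} a measurable random matrix with E‖X‖² < ∞. Let L ∈ ℝ^{s×s} be orthogonal and b_1,…,b_s ≥ 1 natural numbers. For each outcome ω set Y(ω) := L * X(ω) and define Ŷ(ω) row-wise by min-max quantization: if range(y_i(ω)) > 0 then Ŷ_{ij}(ω) := round(y_{ij}(ω)/s_i(ω))·s_i(ω) with s_i(ω) := range(y_i(ω))/(2^{b_i} − 1), and Ŷ_i(ω) := y_i(ω) otherwise. Then E[‖L⁻¹ * Ŷ − X‖²] ≤ (d/2) · ∑_{i=1}^s E[‖y_i‖²] / (2^{b_i} − 1)², where ‖·‖ is the Frobenius norm and ‖y_i‖ the Euclidean norm of the i-th row of L X. -/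

import Mathlib

/-!
Multiplication by an orthogonal `L` preserves the Frobenius norm, so `‖L⁻¹ Ŷ - X‖ = ‖Ŷ - L X‖`,
and the error splits over the rows of `Y = L X`. In row `i` each of the `d` entries is off by at
most half the scale `range(yᵢ) / (2 ^ bᵢ - 1)`, and `range(yᵢ)² ≤ 2 ‖yᵢ‖²` because
`(u - v)² ≤ 2 (u² + v²)`; hence the constant `d / 4 * 2`. Integrate.
-/

open MeasureTheory

/-- The range of a vector: `max_j y_j − min_j y_j`. -/
noncomputable def vrange {d : ℕ} (y : Fin d → ℝ) : ℝ := (⨆ j, y j) - (⨅ j, y j)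

/-- Min-max scale of a row `y` at bit width `b`. -/
noncomputable def mmScale {d : ℕ} (y : Fin d → ℝ) (b : ℕ) : ℝ :=
  vrange y / ((2 : ℝ) ^ b - 1)

/-- Min-max quantize–dequantize of a row `y` at bit width `b`. -/
noncomputable def mmDequant {d : ℕ} (y : Fin d → ℝ) (b : ℕ) : Fin d → ℝ :=
  fun j =>
    if 0 < vrange y then (round (y j / mmScale y b) : ℝ) * mmScale y b else y j

open Matrix

section Algebra

variable {R m n : Type*} [Fintype m] [Fintype n]

theorem sum_sq_eq_trace_transpose_mul_self [CommSemiring R] (M : Matrix m n R) :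
    ∑ i, ∑ j, M i j ^ 2 = (Mᵀ * M).trace := by
  rw [Finset.sum_comm]
  simp only [trace, diag_apply, mul_apply, transpose_apply, pow_two]

theorem sum_sq_mul_of_transpose_mul_self_eq_one {l : Type*} [Fintype l] [CommSemiring R]
    [DecidableEq m] {A : Matrix l m R} (hA : Aᵀ * A = 1) (M : Matrix m n R) :
    ∑ i, ∑ j, (A * M) i j ^ 2 = ∑ i, ∑ j, M i j ^ 2 := by
  rw [sum_sq_eq_trace_transpose_mul_self, sum_sq_eq_trace_transpose_mul_self, transpose_mul,
    Matrix.mul_assoc, ← Matrix.mul_assoc Aᵀ, hA, Matrix.one_mul]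

theorem sum_sq_inv_mul_sub [CommRing R] [DecidableEq m] {A : Matrix m m R} (hA : Aᵀ * A = 1)
    (Z M : Matrix m n R) :
    ∑ i, ∑ j, (A⁻¹ * Z - M) i j ^ 2 = ∑ i, ∑ j, (Z - A * M) i j ^ 2 := by
  rw [← sum_sq_mul_of_transpose_mul_self_eq_one hA, Matrix.mul_sub,
    mul_nonsing_inv_cancel_left A Z (isUnit_det_of_left_inverse hA)]

theorem sub_sq_le_two_mul_sum_sq [CommRing R] [LinearOrder R] [IsStrictOrderedRing R]
    (y : n → R) (p q : n) : (y p - y q) ^ 2 ≤ 2 * ∑ j, y j ^ 2 := by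
  classical
  rcases eq_or_ne p q with rfl | hpq
  · simpa using Finset.sum_nonneg fun j _ => sq_nonneg (y j)
  · have hpair : y p ^ 2 + y q ^ 2 ≤ ∑ j, y j ^ 2 := by
      rw [← Finset.sum_pair (f := fun j => y j ^ 2) hpq]
      exact Finset.sum_le_univ_sum_of_nonneg fun j => sq_nonneg (y j)
    linarith [sq_nonneg (y p + y q)]

theorem round_div_mul_sub_sq_le {K : Type*} [Field K] [LinearOrder K] [IsStrictOrderedRing K]
    [FloorRing K] {c : K} (hc : c ≠ 0) (x : K) : (round (x / c) * c - x) ^ 2 ≤ c ^ 2 / 4 := by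
  have hround : (x / c - round (x / c)) ^ 2 ≤ (1 / 2) ^ 2 :=
    sq_le_sq' (abs_le.mp (abs_sub_round _)).1 (abs_le.mp (abs_sub_round _)).2
  calc (round (x / c) * c - x) ^ 2 = (x / c - round (x / c)) ^ 2 * c ^ 2 := by
        field_simp
        ring
    _ ≤ (1 / 2) ^ 2 * c ^ 2 := by gcongr
    _ = c ^ 2 / 4 := by ring

end Algebra

section Quantization

variable {d : ℕ}

theorem vrange_sq_le (y : Fin d → ℝ) : vrange y ^ 2 ≤ 2 * ∑ j, y j ^ 2 := by
  rcases isEmpty_or_nonempty (Fin d) with _ | _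
  · simp [vrange]
  · obtain ⟨p, hp⟩ := exists_eq_ciSup_of_finite (f := y)
    obtain ⟨q, hq⟩ := exists_eq_ciInf_of_finite (f := y)
    rw [vrange, ← hp, ← hq]
    exact sub_sq_le_two_mul_sum_sq y p q

theorem mmScale_sq_le (y : Fin d → ℝ) (b : ℕ) :
    mmScale y b ^ 2 ≤ 2 * (∑ j, y j ^ 2) / ((2 : ℝ) ^ b - 1) ^ 2 := by
  rw [mmScale, div_pow]
  gcongr
  exact vrange_sq_le y

theorem mmScale_pos {y : Fin d → ℝ} (hy : 0 < vrange y) {b : ℕ} (hb : 1 ≤ b) :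
    0 < mmScale y b :=
  div_pos hy (sub_pos.mpr (one_lt_pow₀ one_lt_two (Nat.one_le_iff_ne_zero.mp hb)))

theorem mmDequant_sub_sq_le (y : Fin d → ℝ) {b : ℕ} (hb : 1 ≤ b) (j : Fin d) :
    (mmDequant y b j - y j) ^ 2 ≤ mmScale y b ^ 2 / 4 := by
  by_cases hy : 0 < vrange y
  · rw [mmDequant, if_pos hy]
    exact round_div_mul_sub_sq_le (mmScale_pos hy hb).ne' (y j)
  · rw [mmDequant, if_neg hy, sub_self, zero_pow two_ne_zero]
    positivity

theorem sum_mmDequant_sub_sq_le (y : Fin d → ℝ) {b : ℕ} (hb : 1 ≤ b) :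
    ∑ j, (mmDequant y b j - y j) ^ 2 ≤
      (d : ℝ) / 2 * ((∑ j, y j ^ 2) / ((2 : ℝ) ^ b - 1) ^ 2) :=
  calc ∑ j, (mmDequant y b j - y j) ^ 2 ≤ ∑ _j : Fin d, mmScale y b ^ 2 / 4 :=
        Finset.sum_le_sum fun j _ => mmDequant_sub_sq_le y hb j
    _ = d / 4 * mmScale y b ^ 2 := by
        rw [Finset.sum_const, Finset.card_univ, Fintype.card_fin, nsmul_eq_mul]
        ring
    _ ≤ d / 4 * (2 * (∑ j, y j ^ 2) / ((2 : ℝ) ^ b - 1) ^ 2) := by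
        gcongr
        exact mmScale_sq_le y b
    _ = d / 2 * ((∑ j, y j ^ 2) / ((2 : ℝ) ^ b - 1) ^ 2) := by ring

theorem sum_sq_inv_mul_mmDequant_sub_le {m : Type*} [Fintype m] [DecidableEq m]
    {L : Matrix m m ℝ} (hL : Lᵀ * L = 1) {b : m → ℕ} (hb : ∀ i, 1 ≤ b i)
    (M : Matrix m (Fin d) ℝ) :
    ∑ i, ∑ j, (L⁻¹ * (Matrix.of fun i => mmDequant ((L * M) i) (b i)) - M) i j ^ 2 ≤
      (d : ℝ) / 2 * ∑ i, (∑ j, (L * M) i j ^ 2) / ((2 : ℝ) ^ b i - 1) ^ 2 := by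
  rw [sum_sq_inv_mul_sub hL, Finset.mul_sum]
  exact Finset.sum_le_sum fun i _ => sum_mmDequant_sub_sq_le ((L * M) i) (hb i)

end Quantization

section SecondMoments

variable {Ω : Type*} [MeasurableSpace Ω] {μ : Measure Ω}

theorem memLp_two_of_integrable_sum_sq {ι : Type*} [Fintype ι] {f : ι → Ω → ℝ}
    (hf : ∀ i, AEStronglyMeasurable (f i) μ) (hsum : Integrable (fun ω => ∑ i, f i ω ^ 2) μ)
    (i : ι) : MemLp (f i) 2 μ := by
  refine (memLp_two_iff_integrable_sq (hf i)).mpr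
    (hsum.mono' ((hf i).pow 2) (ae_of_all μ fun ω => ?_))
  rw [Real.norm_of_nonneg (sq_nonneg _)]
  exact Finset.single_le_sum (f := fun k => f k ω ^ 2) (fun k _ => sq_nonneg _)
    (Finset.mem_univ i)

theorem integrable_sum_sq_mul_row {l m n : Type*} [Fintype m] [Fintype n]
    {X : Ω → Matrix m n ℝ} (hX : ∀ i j, MemLp (fun ω => X ω i j) 2 μ) (A : Matrix l m ℝ)
    (i : l) : Integrable (fun ω => ∑ j, (A * X ω) i j ^ 2) μ := by
  simp only [mul_apply]
  exact integrable_finsetSum _ fun j _ =>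
    (memLp_finsetSum _ fun k _ => (hX k j).const_mul (A i k)).integrable_sq

end SecondMoments

theorem stamp_ubound_expectation_general {Ω m : Type*} [MeasurableSpace Ω] {μ : Measure Ω}
    [Fintype m] [DecidableEq m] {d : ℕ} {X : Ω → Matrix m (Fin d) ℝ}
    (hX : ∀ i j, MemLp (fun ω => X ω i j) 2 μ) {L : Matrix m m ℝ} (hL : Lᵀ * L = 1)
    {b : m → ℕ} (hb : ∀ i, 1 ≤ b i) :
    (∫ ω, ∑ i, ∑ j,
        ((L⁻¹ * (Matrix.of fun i => mmDequant ((L * X ω) i) (b i)) - X ω) i j) ^ 2 ∂μ) ≤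
      ((d : ℝ) / 2) *
        ∑ i, (∫ ω, ∑ j, ((L * X ω) i j) ^ 2 ∂μ) / ((2 : ℝ) ^ (b i) - 1) ^ 2 := by
  have hrow (i : m) :
      Integrable (fun ω => (∑ j, (L * X ω) i j ^ 2) / ((2 : ℝ) ^ b i - 1) ^ 2) μ :=
    (integrable_sum_sq_mul_row hX L i).div_const _
  calc
    _ ≤ ∫ ω, (d : ℝ) / 2 * ∑ i, (∑ j, (L * X ω) i j ^ 2) / ((2 : ℝ) ^ b i - 1) ^ 2 ∂μ :=
        integral_mono_of_nonneg (ae_of_all μ fun ω => by positivity)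
          ((integrable_finsetSum _ fun i _ => hrow i).const_mul _)
          (ae_of_all μ fun ω => sum_sq_inv_mul_mmDequant_sub_le hL hb (X ω))
    _ = _ := by
        rw [integral_const_mul, integral_finsetSum _ fun i _ => hrow i]
        simp only [integral_div]

/-- **Theorem 1, expectation form.** For a random activation matrix `X`
with finite second moment, an orthogonal `L`, and row-wise min-max quantization of
`Y = L X` at bit widths `b i ≥ 1`,
`E[‖L⁻¹ Ŷ − X‖²] ≤ (d/2) · ∑ i E[‖y_i‖²] / (2^{b_i} − 1)²`. -/
theorem stamp_ubound_expectation
    {Ω : Type*} [MeasurableSpace Ω] (μ : Measure Ω) [IsProbabilityMeasure μ]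
    (s d : ℕ) (X : Ω → Matrix (Fin s) (Fin d) ℝ) (hX : Measurable fun ω i j => X ω i j)
    (hX2 : Integrable (fun ω => ∑ i, ∑ j, (X ω i j) ^ 2) μ)
    (L : Matrix (Fin s) (Fin s) ℝ) (hL : L.transpose * L = 1)
    (b : Fin s → ℕ) (hb : ∀ i, 1 ≤ b i) :
    (∫ ω, ∑ i, ∑ j,
        ((L⁻¹ * (Matrix.of fun i => mmDequant ((L * X ω) i) (b i)) - X ω) i j) ^ 2 ∂μ) ≤
      ((d : ℝ) / 2) *
        ∑ i, (∫ ω, ∑ j, ((L * X ω) i j) ^ 2 ∂μ) / ((2 : ℝ) ^ (b i) - 1) ^ 2 := by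
  have hmeas (p : Fin s × Fin d) : AEStronglyMeasurable (fun ω => X ω p.1 p.2) μ :=
    (measurable_pi_iff.mp (measurable_pi_iff.mp hX p.1) p.2).aestronglyMeasurable
  simp only [← Fintype.sum_prod_type'] at hX2
  exact stamp_ubound_expectation_general
    (fun i j => memLp_two_of_integrable_sum_sq hmeas hX2 (i, j)) hL hb
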